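/- Let r₂ > 0 and let F : ℝ^{3×3} → ℝ be twice continuously differentiable with F(0) = 0, F(A) ≥ 0 for every matrix A with |A| ≤ r₂, and F(A) = 0 only when A = 0 (for |A| ≤ r₂). Suppose Q : ℝ³ → ℝ^{3×3} is twice continuously differentiable, Q(x) is symmetric and traceless and |Q(x)| ≤ r₂ for every x ∈ ℝ³, Q solves −ΔQ(x) + L[∇F(Q(x))] = 0 for all x ∈ ℝ³, and the functions x ↦ |∇Q(x)|² and x ↦ F(Q(x)) are Lebesgue integrable on ℝ³. Then Q(x) = 0 for every x ∈ ℝ³. -/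

import Mathlib

open MeasureTheory Matrix

noncomputable section

/-- `ℝ³` with the Euclidean norm. -/
abbrev E3 : Type := EuclideanSpace ℝ (Fin 3)
/-- the space of `3×3` real matrices -/
abbrev Mat : Type := Matrix (Fin 3) (Fin 3) ℝ

attribute [local instance] Matrix.normedAddCommGroup Matrix.normedSpace

/-- Frobenius inner product `A : B`. -/
def frob (A B : Mat) : ℝ := ∑ i, ∑ j, A i j * B i j
/-- Frobenius norm `|A|`. -/
def frobNorm (A : Mat) : ℝ := Real.sqrt (frob A A)
/-- `L[A] = A - (1/3) tr A · I`, projection onto traceless matrices. -/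
def tracelessPart (A : Mat) : Mat := A - (Matrix.trace A / 3) • (1 : Mat)
/-- partial derivative `∂ₖ f` of a scalar function on `ℝ³` -/
def pd (k : Fin 3) (f : E3 → ℝ) (x : E3) : ℝ := fderiv ℝ f x (EuclideanSpace.single k 1)
/-- componentwise Laplacian `ΔQ` of a matrix-valued map -/
def lapM (Q : E3 → Mat) (x : E3) : Mat :=
  Matrix.of fun i j => ∑ k, pd k (fun y => pd k (fun z => Q z i j) y) x
/-- `|∇Q(x)|² = Σ_{k,i,j} (∂ₖ Q_{ij}(x))²` -/
def gradNormSq (Q : E3 → Mat) (x : E3) : ℝ := ∑ k, ∑ i, ∑ j, (pd k (fun y => Q y i j) x) ^ 2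
/-- Frobenius gradient `∇F(A)` of a function on matrices, with entries `∂F/∂A_{ij}`. -/
def matGrad (F : Mat → ℝ) (A : Mat) : Mat :=
  Matrix.of fun i j => fderiv ℝ F A (Matrix.single i j 1)

/-!
A divergence-free `C¹` vector field `X` which is integrable has `∫ X = 0`: test `div X = 0` against
`φ (c x)` for a bump-type function `φ` and let `c → 0`, which leaves `∇φ(0) · ∫ X = 0`, where
`∇φ(0)` is arbitrary. The system `Δu = ∇F(u)` says that the stress tensor
`(½|∇u|² + F(u)) δᵢⱼ - ∂ᵢu · ∂ⱼu` is divergence-free, so all its entries have zero integral. Its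
trace gives the Pohozaev identity `(n/2 - 1) ∫ |∇u|² + n ∫ F(u) = 0`, and for `n ≥ 2` both terms
are nonnegative, whence `F(u) = 0`.
The trace part removed by `L` does not matter: only the product of the equation with `∂ⱼQ` enters,
and `∂ⱼQ` is traceless.
-/

open InnerProductSpace Filter Topology Laplacian

section DivergenceFree

variable {E : Type*} [NormedAddCommGroup E] [NormedSpace ℝ E] [MeasurableSpace E] [BorelSpace E]
  {μ : Measure E}

lemma tendsto_integral_comp_smul_mul {g f : E → ℝ} (hg : Continuous g) (hgs : HasCompactSupport g)
    (hf : Integrable f μ) :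
    Tendsto (fun c : ℝ => ∫ x, g (c • x) * f x ∂μ) (𝓝 0) (𝓝 (g 0 * ∫ x, f x ∂μ)) := by
  obtain ⟨C, hC⟩ := hg.bounded_above_of_compact_support hgs
  rw [← integral_const_mul]
  refine tendsto_integral_filter_of_dominated_convergence (fun x => C * ‖f x‖)
    (.of_forall fun c => ?_) (.of_forall fun c => .of_forall fun x => ?_)
    (hf.norm.const_mul C) (.of_forall fun x => ?_)
  · exact (hg.comp (continuous_const_smul c)).aestronglyMeasurable.mul hf.aestronglyMeasurable
  · rw [norm_mul]
    gcongr
    exact hC _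
  · have hcont : Continuous fun c : ℝ => g (c • x) * f x := by fun_prop
    simpa using hcont.tendsto 0

variable [FiniteDimensional ℝ E] [μ.IsAddHaarMeasure]

lemma integral_mul_fderiv_eq_neg_fderiv_mul_of_hasCompactSupport {φ g : E → ℝ}
    (hφ : ContDiff ℝ 1 φ) (hφs : HasCompactSupport φ) (hg : ContDiff ℝ 1 g) (v : E) :
    ∫ x, φ x * fderiv ℝ g x v ∂μ = -∫ x, fderiv ℝ φ x v * g x ∂μ := by
  have hφ' : Continuous fun x => fderiv ℝ φ x v := by fun_prop
  have hg' : Continuous fun x => fderiv ℝ g x v := by fun_prop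
  exact integral_mul_fderiv_eq_neg_fderiv_mul_of_integrable
    ((hφ'.mul hg.continuous).integrable_of_hasCompactSupport (hφs.fderiv_apply ℝ v).mul_right)
    ((hφ.continuous.mul hg').integrable_of_hasCompactSupport hφs.mul_right)
    ((hφ.continuous.mul hg.continuous).integrable_of_hasCompactSupport hφs.mul_right)
    (fun x _ => hφ.differentiable one_ne_zero x) (fun x _ => hg.differentiable one_ne_zero x)

variable {ι : Type*} [Fintype ι] {b : ι → E} {X : ι → E → ℝ}

lemma sum_integral_fderiv_mul_eq_zero (hX : ∀ i, ContDiff ℝ 1 (X i))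
    (hdiv : ∀ x, ∑ i, fderiv ℝ (X i) x (b i) = 0) {φ : E → ℝ} (hφ : ContDiff ℝ 1 φ)
    (hφs : HasCompactSupport φ) :
    ∑ i, ∫ x, fderiv ℝ φ x (b i) * X i x ∂μ = 0 := by
  have hφX : ∀ i, Integrable (fun x => φ x * fderiv ℝ (X i) x (b i)) μ := fun i =>
    (by fun_prop : Continuous fun x => φ x * fderiv ℝ (X i) x (b i)).integrable_of_hasCompactSupport
      hφs.mul_right
  calc ∑ i, ∫ x, fderiv ℝ φ x (b i) * X i x ∂μ
      = -∑ i, ∫ x, φ x * fderiv ℝ (X i) x (b i) ∂μ := by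
        simp only [integral_mul_fderiv_eq_neg_fderiv_mul_of_hasCompactSupport hφ hφs (hX _),
          Finset.sum_neg_distrib, neg_neg]
    _ = -∫ x, φ x * ∑ i, fderiv ℝ (X i) x (b i) ∂μ := by
        simp only [Finset.mul_sum, integral_finsetSum _ fun i _ => hφX i]
    _ = 0 := by simp only [hdiv, mul_zero, integral_zero, neg_zero]

lemma sum_fderiv_zero_mul_integral_eq_zero (hX : ∀ i, ContDiff ℝ 1 (X i))
    (hXi : ∀ i, Integrable (X i) μ) (hdiv : ∀ x, ∑ i, fderiv ℝ (X i) x (b i) = 0) {φ : E → ℝ}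
    (hφ : ContDiff ℝ 1 φ) (hφs : HasCompactSupport φ) :
    ∑ i, fderiv ℝ φ 0 (b i) * ∫ x, X i x ∂μ = 0 := by
  have hlim : Tendsto (fun c : ℝ => ∑ i, ∫ x, fderiv ℝ φ (c • x) (b i) * X i x ∂μ) (𝓝[≠] 0)
      (𝓝 (∑ i, fderiv ℝ φ 0 (b i) * ∫ x, X i x ∂μ)) :=
    (tendsto_finsetSum _ fun i _ => tendsto_integral_comp_smul_mul (by fun_prop)
      (hφs.fderiv_apply ℝ (b i)) (hXi i)).mono_left nhdsWithin_le_nhds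
  refine tendsto_nhds_unique hlim (tendsto_const_nhds.congr' ?_)
  filter_upwards [self_mem_nhdsWithin] with c (hc : c ≠ 0)
  have hzero := sum_integral_fderiv_mul_eq_zero (μ := μ) hX hdiv
    (hφ.comp (contDiff_const_smul c)) (hφs.comp_smul hc)
  simp only [Function.comp_def, fderiv_comp_smul, _root_.smul_apply, smul_eq_mul,
    mul_assoc, integral_const_mul, ← Finset.mul_sum] at hzero
  exact ((mul_eq_zero.1 hzero).resolve_left hc).symm

lemma sum_apply_mul_integral_eq_zero_of_div_eq_zero (hX : ∀ i, ContDiff ℝ 1 (X i))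
    (hXi : ∀ i, Integrable (X i) μ) (hdiv : ∀ x, ∑ i, fderiv ℝ (X i) x (b i) = 0)
    (ℓ : E →L[ℝ] ℝ) : ∑ i, ℓ (b i) * ∫ x, X i x ∂μ = 0 := by
  let χ : ContDiffBump (0 : E) := ⟨1, 2, one_pos, one_lt_two⟩
  have hφ : ContDiff ℝ 1 fun x => χ x * ℓ x := χ.contDiff.mul ℓ.contDiff
  have hφs : HasCompactSupport fun x => χ x * ℓ x := χ.hasCompactSupport.mul_right
  have hφ0 : fderiv ℝ (fun x => χ x * ℓ x) 0 = ℓ := by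
    have heq : (fun x => χ x * ℓ x) =ᶠ[𝓝 0] ℓ :=
      χ.eventuallyEq_one.mono fun x hx => by simp [hx]
    rw [heq.fderiv_eq, ℓ.fderiv]
  simpa only [hφ0] using sum_fderiv_zero_mul_integral_eq_zero hX hXi hdiv hφ hφs

end DivergenceFree

section Stress

variable {E : Type*} [NormedAddCommGroup E] [InnerProductSpace ℝ E]
  {V : Type*} [NormedAddCommGroup V] [NormedSpace ℝ V]
  {ι : Type*} [Fintype ι] {b : OrthonormalBasis ι ℝ E} {B : V →L[ℝ] V →L[ℝ] ℝ}
  {u : E → V} {f : E → ℝ}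

/-- The Dirichlet density `|∇u|² = ∑ₖ B(∂ₖu, ∂ₖu)` of `u : E → V`, where the bilinear form `B`
plays the role of an inner product on `V` which need not be related to its norm. -/
def dirichletDensity (b : OrthonormalBasis ι ℝ E) (B : V →L[ℝ] V →L[ℝ] ℝ) (u : E → V) (x : E) : ℝ :=
  ∑ k, B (fderiv ℝ u x (b k)) (fderiv ℝ u x (b k))

/-- The stress (energy-momentum) tensor `(½|∇u|² + f) δᵢⱼ - B(∂ᵢu, ∂ⱼu)` of `u : E → V` with
potential energy density `f`, in the coordinates given by `b`. In applications `f = F ∘ u`. -/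
def stressTensor [DecidableEq ι] (b : OrthonormalBasis ι ℝ E) (B : V →L[ℝ] V →L[ℝ] ℝ) (u : E → V)
    (f : E → ℝ) (x : E) : Matrix ι ι ℝ :=
  (dirichletDensity b B u x / 2 + f x) • (1 : Matrix ι ι ℝ) -
    Matrix.of fun i j => B (fderiv ℝ u x (b i)) (fderiv ℝ u x (b j))

lemma stressTensor_apply [DecidableEq ι] (x : E) (i j : ι) :
    stressTensor b B u f x i j =
      (dirichletDensity b B u x / 2 + f x) * (1 : Matrix ι ι ℝ) i j -
        B (fderiv ℝ u x (b i)) (fderiv ℝ u x (b j)) :=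
  rfl

lemma trace_stressTensor [DecidableEq ι] (x : E) :
    (stressTensor b B u f x).trace =
      (Fintype.card ι / 2 - 1) * dirichletDensity b B u x + Fintype.card ι * f x := by
  have htrace : (Matrix.of fun i j => B (fderiv ℝ u x (b i)) (fderiv ℝ u x (b j))).trace =
      dirichletDensity b B u x := rfl
  rw [stressTensor, Matrix.trace_sub, Matrix.trace_smul, Matrix.trace_one, htrace, smul_eq_mul]
  ring

lemma contDiff_apply_fderiv_fderiv (hu : ContDiff ℝ 2 u) (v w : E) :
    ContDiff ℝ 1 fun x => B (fderiv ℝ u x v) (fderiv ℝ u x w) :=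
  have hu' : ContDiff ℝ 1 (fderiv ℝ u) := hu.fderiv_right le_rfl
  (B.contDiff.comp (hu'.clm_apply contDiff_const)).clm_apply (hu'.clm_apply contDiff_const)

lemma hasFDerivAt_fderiv_apply (hu : ContDiff ℝ 2 u) (v x : E) :
    HasFDerivAt (fun y => fderiv ℝ u y v) ((fderiv ℝ (fderiv ℝ u) x).flip v) x := by
  have hu' : Differentiable ℝ (fderiv ℝ u) :=
    (hu.fderiv_right (m := 1) le_rfl).differentiable one_ne_zero
  simpa using (hu' x).hasFDerivAt.clm_apply (hasFDerivAt_const v x)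

lemma fderiv_apply_fderiv_fderiv (hu : ContDiff ℝ 2 u) (v w a x : E) :
    fderiv ℝ (fun y => B (fderiv ℝ u y v) (fderiv ℝ u y w)) x a =
      B (fderiv ℝ u x v) (fderiv ℝ (fderiv ℝ u) x a w) +
        B (fderiv ℝ (fderiv ℝ u) x a v) (fderiv ℝ u x w) := by
  rw [(B.hasFDerivAt_of_bilinear (hasFDerivAt_fderiv_apply hu v x)
    (hasFDerivAt_fderiv_apply hu w x)).fderiv]
  simp

lemma contDiff_dirichletDensity (hu : ContDiff ℝ 2 u) : ContDiff ℝ 1 (dirichletDensity b B u) :=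
  ContDiff.sum fun _ _ => contDiff_apply_fderiv_fderiv hu _ _

lemma fderiv_dirichletDensity (hB : B.toBilinForm.IsSymm) (hu : ContDiff ℝ 2 u) (x a : E) :
    fderiv ℝ (dirichletDensity b B u) x a =
      2 * ∑ k, B (fderiv ℝ u x (b k)) (fderiv ℝ (fderiv ℝ u) x a (b k)) := by
  unfold dirichletDensity
  rw [fderiv_fun_sum fun k _ =>
    (contDiff_apply_fderiv_fderiv hu _ _).differentiable one_ne_zero x, _root_.sum_apply,
    Finset.mul_sum]
  refine Finset.sum_congr rfl fun k _ => ?_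
  have hsymm : B (fderiv ℝ (fderiv ℝ u) x a (b k)) (fderiv ℝ u x (b k)) =
      B (fderiv ℝ u x (b k)) (fderiv ℝ (fderiv ℝ u) x a (b k)) := hB.eq _ _
  rw [fderiv_apply_fderiv_fderiv hu, hsymm, two_mul]

lemma contDiff_stressTensor_apply [DecidableEq ι] (hu : ContDiff ℝ 2 u) (hf : ContDiff ℝ 1 f)
    (i j : ι) : ContDiff ℝ 1 fun x => stressTensor b B u f x i j :=
  ((((contDiff_dirichletDensity hu).div_const 2).add hf).mul contDiff_const).sub
    (contDiff_apply_fderiv_fderiv hu _ _)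

lemma fderiv_stressTensor_apply [DecidableEq ι] (hB : B.toBilinForm.IsSymm) (hu : ContDiff ℝ 2 u)
    (hf : ContDiff ℝ 1 f) (x a : E) (i j : ι) :
    fderiv ℝ (fun y => stressTensor b B u f y i j) x a =
      (1 : Matrix ι ι ℝ) i j *
          (∑ k, B (fderiv ℝ u x (b k)) (fderiv ℝ (fderiv ℝ u) x a (b k)) + fderiv ℝ f x a) -
        (B (fderiv ℝ u x (b i)) (fderiv ℝ (fderiv ℝ u) x a (b j)) +
          B (fderiv ℝ (fderiv ℝ u) x a (b i)) (fderiv ℝ u x (b j))) := by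
  have hd : DifferentiableAt ℝ (dirichletDensity b B u) x :=
    (contDiff_dirichletDensity hu).differentiable one_ne_zero x
  have hf' : DifferentiableAt ℝ f x := hf.differentiable one_ne_zero x
  have hρ : DifferentiableAt ℝ (fun y => dirichletDensity b B u y / 2 + f y) x := by fun_prop
  simp only [stressTensor_apply]
  rw [fderiv_fun_sub (hρ.mul_const _)
      ((contDiff_apply_fderiv_fderiv hu _ _).differentiable one_ne_zero x),
    fderiv_mul_const hρ, fderiv_fun_add (by fun_prop) hf']
  simp [div_eq_mul_inv, fderiv_mul_const hd, fderiv_apply_fderiv_fderiv hu,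
    fderiv_dirichletDensity hB hu, mul_add]

lemma abs_apply_fderiv_fderiv_le_dirichletDensity (hB : B.toBilinForm.IsPosSemidef) (i j : ι)
    (x : E) : |B (fderiv ℝ u x (b i)) (fderiv ℝ u x (b j))| ≤ dirichletDensity b B u x := by
  set v := fderiv ℝ u x (b i)
  set w := fderiv ℝ u x (b j)
  have hle : ∀ k, B (fderiv ℝ u x (b k)) (fderiv ℝ u x (b k)) ≤ dirichletDensity b B u x :=
    fun k => Finset.single_le_sum (f := fun k => B (fderiv ℝ u x (b k)) (fderiv ℝ u x (b k)))
      (fun _ _ => hB.nonneg _) (Finset.mem_univ k)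
  have hsymm : B w v = B v w := hB.isSymm.eq w v
  have hadd : 0 ≤ B (v + w) (v + w) := hB.nonneg _
  have hsub : 0 ≤ B (v - w) (v - w) := hB.nonneg _
  simp only [map_add, map_sub, _root_.add_apply, _root_.sub_apply, hsymm] at hadd hsub
  rw [abs_le]
  constructor <;> linarith [hle i, hle j]

variable [FiniteDimensional ℝ E]

lemma laplacian_eq_sum_fderiv_fderiv (b : OrthonormalBasis ι ℝ E) (u : E → V) (x : E) :
    Δ u x = ∑ k, fderiv ℝ (fderiv ℝ u) x (b k) (b k) := by
  simp [laplacian_eq_iteratedFDeriv_orthonormalBasis u b, iteratedFDeriv_two_apply]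

lemma sum_fderiv_stressTensor_eq_zero [DecidableEq ι] (hB : B.toBilinForm.IsSymm)
    (hu : ContDiff ℝ 2 u) (hf : ContDiff ℝ 1 f)
    (heq : ∀ x a, fderiv ℝ f x a = B (Δ u x) (fderiv ℝ u x a)) (j : ι) (x : E) :
    ∑ i, fderiv ℝ (fun y => stressTensor b B u f y i j) x (b i) = 0 := by
  have hcomm : ∀ v w, fderiv ℝ (fderiv ℝ u) x v w = fderiv ℝ (fderiv ℝ u) x w v :=
    hu.contDiffAt.isSymmSndFDerivAt (by simp)
  simp only [fderiv_stressTensor_apply hB hu hf, heq, Finset.sum_sub_distrib,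
    Finset.sum_add_distrib, Matrix.one_apply, ite_mul, one_mul, zero_mul, Finset.sum_ite_eq',
    Finset.mem_univ, if_true]
  rw [laplacian_eq_sum_fderiv_fderiv b, map_sum, _root_.sum_apply]
  simp only [hcomm (b j), sub_self]

variable [MeasurableSpace E] [BorelSpace E]

lemma integrable_stressTensor_apply [DecidableEq ι] (hB : B.toBilinForm.IsPosSemidef)
    (hu : ContDiff ℝ 2 u) (hui : Integrable (dirichletDensity b B u)) (hfi : Integrable f)
    (i j : ι) : Integrable fun x => stressTensor b B u f x i j :=
  (((hui.div_const 2).add hfi).mul_const _).sub <| hui.mono'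
    (contDiff_apply_fderiv_fderiv hu _ _).continuous.aestronglyMeasurable
    (.of_forall fun _ => abs_apply_fderiv_fderiv_le_dirichletDensity hB i j _)

lemma integral_stressTensor_apply_eq_zero [DecidableEq ι] (hB : B.toBilinForm.IsPosSemidef)
    (hu : ContDiff ℝ 2 u) (hf : ContDiff ℝ 1 f)
    (heq : ∀ x a, fderiv ℝ f x a = B (Δ u x) (fderiv ℝ u x a))
    (hui : Integrable (dirichletDensity b B u)) (hfi : Integrable f) (i j : ι) :
    ∫ x, stressTensor b B u f x i j = 0 := by
  have hsum := sum_apply_mul_integral_eq_zero_of_div_eq_zero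
    (fun k => contDiff_stressTensor_apply hu hf k j)
    (fun k => integrable_stressTensor_apply hB hu hui hfi k j)
    (sum_fderiv_stressTensor_eq_zero hB.isSymm hu hf heq j) (innerSL ℝ (b i))
  simpa [b.inner_eq_ite] using hsum

theorem integral_pohozaev_eq_zero (hB : B.toBilinForm.IsPosSemidef)
    (hu : ContDiff ℝ 2 u) (hf : ContDiff ℝ 1 f)
    (heq : ∀ x a, fderiv ℝ f x a = B (Δ u x) (fderiv ℝ u x a))
    (hui : Integrable (dirichletDensity b B u)) (hfi : Integrable f) :
    (Fintype.card ι / 2 - 1) * (∫ x, dirichletDensity b B u x) + Fintype.card ι * ∫ x, f x = 0 := by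
  classical
  calc (Fintype.card ι / 2 - 1) * (∫ x, dirichletDensity b B u x) + Fintype.card ι * ∫ x, f x
      = ∫ x, (stressTensor b B u f x).trace := by
        simp only [trace_stressTensor]
        rw [integral_add (hui.const_mul _) (hfi.const_mul _), integral_const_mul,
          integral_const_mul]
    _ = ∑ i, ∫ x, stressTensor b B u f x i i :=
        integral_finsetSum _ fun i _ => integrable_stressTensor_apply hB hu hui hfi i i
    _ = 0 := Finset.sum_eq_zero fun i _ =>
        integral_stressTensor_apply_eq_zero hB hu hf heq hui hfi i i

lemma eq_zero_of_fderiv_eq_apply_laplacian (b : OrthonormalBasis ι ℝ E)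
    (hι : 2 ≤ Fintype.card ι) (hB : B.toBilinForm.IsPosSemidef)
    (hu : ContDiff ℝ 2 u) (hf : ContDiff ℝ 1 f)
    (heq : ∀ x a, fderiv ℝ f x a = B (Δ u x) (fderiv ℝ u x a)) (hf0 : ∀ x, 0 ≤ f x)
    (hui : Integrable (dirichletDensity b B u)) (hfi : Integrable f) : f = 0 := by
  have hpohozaev := integral_pohozaev_eq_zero hB hu hf heq hui hfi
  have hdirichlet : 0 ≤ ∫ x, dirichletDensity b B u x :=
    integral_nonneg fun _ => Finset.sum_nonneg fun _ _ => hB.nonneg _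
  have hn : (2 : ℝ) ≤ Fintype.card ι := by exact_mod_cast hι
  have hintegral : ∫ x, f x = 0 := by
    refine le_antisymm ?_ (integral_nonneg hf0)
    nlinarith
  exact (hf.continuous.ae_eq_iff_eq volume continuous_zero).1
    ((integral_eq_zero_iff_of_nonneg hf0 hfi).1 hintegral)

/-- The equation `heq` is the Euler-Lagrange system tested only against derivatives of `u`, so
that it also covers maps `u` subject to a constraint, where `Δ u` and the gradient of `F` differ
by a multiplier which is orthogonal to these derivatives. -/
theorem stmt2_general (b : OrthonormalBasis ι ℝ E) (hι : 2 ≤ Fintype.card ι)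
    (hB : B.toBilinForm.IsPosSemidef) {F : V → ℝ} (hF : ContDiff ℝ 1 F) (hu : ContDiff ℝ 2 u)
    (heq : ∀ x a, fderiv ℝ F (u x) (fderiv ℝ u x a) = B (Δ u x) (fderiv ℝ u x a))
    (hFpos : ∀ x, 0 ≤ F (u x)) (hFzero : ∀ x, F (u x) = 0 → u x = 0)
    (hui : Integrable (dirichletDensity b B u)) (hFi : Integrable fun x => F (u x)) :
    ∀ x, u x = 0 := by
  have hchain : ∀ x a, fderiv ℝ (F ∘ u) x a = B (Δ u x) (fderiv ℝ u x a) := fun x a => by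
    rw [fderiv_comp x (hF.differentiable one_ne_zero _) (hu.differentiable two_ne_zero x),
      ContinuousLinearMap.comp_apply, heq]
  have hFu : F ∘ u = 0 := eq_zero_of_fderiv_eq_apply_laplacian b hι hB hu
    (hF.comp (hu.of_le one_le_two)) hchain hFpos hui hFi
  exact fun x => hFzero x (congrFun hFu x)

end Stress

section Matrices

/-- The Frobenius inner product `frob` as a continuous bilinear form on `3 × 3` matrices. -/
def frobForm : Mat →L[ℝ] Mat →L[ℝ] ℝ :=
  (LinearMap.mk₂ ℝ frob
    (fun A A' B => by simp only [frob, Matrix.add_apply, add_mul, Finset.sum_add_distrib])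
    (fun c A B => by
      simp only [frob, Matrix.smul_apply, smul_eq_mul, mul_assoc, Finset.mul_sum])
    (fun A B B' => by simp only [frob, Matrix.add_apply, mul_add, Finset.sum_add_distrib])
    (fun c A B => by
      simp only [frob, Matrix.smul_apply, smul_eq_mul, mul_left_comm _ c,
        Finset.mul_sum])).toContinuousBilinearMap

lemma frobForm_apply (A B : Mat) : frobForm A B = frob A B := rfl

lemma isPosSemidef_frobForm : frobForm.toBilinForm.IsPosSemidef where
  eq A B := by simp [frobForm_apply, frob, mul_comm]
  nonneg A := show 0 ≤ frob A A from
    Finset.sum_nonneg fun i _ => Finset.sum_nonneg fun j _ => mul_self_nonneg (A i j)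

lemma frobForm_tracelessPart_of_trace_eq_zero (A : Mat) {B : Mat} (hB : B.trace = 0) :
    frobForm (tracelessPart A) B = frobForm A B := by
  have hone : frobForm 1 B = B.trace := by
    simp [frobForm_apply, frob, Matrix.one_apply, Matrix.trace]
  simp [tracelessPart, hone, hB]

lemma frobForm_matGrad (F : Mat → ℝ) (A B : Mat) : frobForm (matGrad F A) B = fderiv ℝ F A B := by
  conv_rhs => rw [Matrix.matrix_eq_sum_single B]
  simp only [frobForm_apply, frob, map_sum]
  refine Finset.sum_congr rfl fun i _ => Finset.sum_congr rfl fun j _ => ?_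
  have hsingle : Matrix.single i j (B i j) = B i j • (Matrix.single i j 1 : Mat) := by simp
  rw [hsingle, map_smul, smul_eq_mul, mul_comm]
  rfl

variable {Q : E3 → Mat}

lemma pd_eq_fderiv_basisFun (k : Fin 3) (f : E3 → ℝ) (x : E3) :
    pd k f x = fderiv ℝ f x (EuclideanSpace.basisFun (Fin 3) ℝ k) := by
  rw [EuclideanSpace.basisFun_apply, pd]

lemma fderiv_matrix_apply {x : E3} (hQ : DifferentiableAt ℝ Q x) (a : E3) (i j : Fin 3) :
    fderiv ℝ (fun y => Q y i j) x a = fderiv ℝ Q x a i j :=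
  DFunLike.congr_fun (hasFDerivAt_pi'.1 (hasFDerivAt_pi'.1 hQ.hasFDerivAt i) j).fderiv a

lemma gradNormSq_eq_dirichletDensity (hQ : Differentiable ℝ Q) :
    gradNormSq Q = dirichletDensity (EuclideanSpace.basisFun (Fin 3) ℝ) frobForm Q := by
  ext x
  simp only [gradNormSq, dirichletDensity, pd_eq_fderiv_basisFun, fderiv_matrix_apply (hQ x), sq]
  rfl

lemma lapM_eq_laplacian (hQ : ContDiff ℝ 2 Q) (x : E3) : lapM Q x = Δ Q x := by
  have hQ' : Differentiable ℝ Q := hQ.differentiable two_ne_zero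
  ext i j
  simp only [lapM, Matrix.of_apply, pd_eq_fderiv_basisFun, fderiv_matrix_apply (hQ' _),
    laplacian_eq_sum_fderiv_fderiv (EuclideanSpace.basisFun (Fin 3) ℝ), Matrix.sum_apply]
  refine Finset.sum_congr rfl fun k _ => ?_
  have hk := hasFDerivAt_fderiv_apply hQ (EuclideanSpace.basisFun (Fin 3) ℝ k) x
  have hkk := DFunLike.congr_fun hk.fderiv (EuclideanSpace.basisFun (Fin 3) ℝ k)
  exact (fderiv_matrix_apply hk.differentiableAt _ i j).trans (congrFun (congrFun hkk i) j)

lemma trace_fderiv_eq_zero {x : E3} (hQ : DifferentiableAt ℝ Q x)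
    (htr : ∀ y, (Q y).trace = 0) (a : E3) : (fderiv ℝ Q x a).trace = 0 := by
  let τ : Mat →L[ℝ] ℝ := (Matrix.traceLinearMap (Fin 3) ℝ ℝ).toContinuousLinearMap
  have hτ : HasFDerivAt (fun _ => (0 : ℝ)) (τ ∘L fderiv ℝ Q x) x := by
    rw [← show τ ∘ Q = fun _ => 0 from funext htr]
    exact τ.hasFDerivAt.comp x hQ.hasFDerivAt
  exact DFunLike.congr_fun (hτ.unique (hasFDerivAt_const 0 x)) a

lemma fderiv_apply_fderiv_eq_frobForm_laplacian {F : Mat → ℝ} (hQ : ContDiff ℝ 2 Q)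
    (htr : ∀ x, (Q x).trace = 0)
    (heq : ∀ x, -lapM Q x + tracelessPart (matGrad F (Q x)) = 0) (x a : E3) :
    fderiv ℝ F (Q x) (fderiv ℝ Q x a) = frobForm (Δ Q x) (fderiv ℝ Q x a) := by
  have htr' : (fderiv ℝ Q x a).trace = 0 :=
    trace_fderiv_eq_zero (hQ.differentiable two_ne_zero x) htr a
  rw [← frobForm_matGrad, ← frobForm_tracelessPart_of_trace_eq_zero _ htr',
    ← neg_add_eq_zero.1 (heq x), lapM_eq_laplacian hQ]

end Matrices

/-- If `F` is `C²`, `F 0 = 0`, `F ≥ 0` on the ball `{|A| ≤ r₂}` with `0` its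
only zero there, then every `C²` symmetric traceless solution of `-ΔQ + L[∇F(Q)] = 0` with
`|Q| ≤ r₂` pointwise and `|∇Q|², F(Q)` integrable vanishes identically. -/
theorem stmt2 (r₂ : ℝ) (hr₂ : 0 < r₂) (F : Mat → ℝ) (hF : ContDiff ℝ 2 F) (hF0 : F 0 = 0)
    (hFpos : ∀ A : Mat, frobNorm A ≤ r₂ → 0 ≤ F A)
    (hFzero : ∀ A : Mat, frobNorm A ≤ r₂ → F A = 0 → A = 0)
    (Q : E3 → Mat) (hQ : ContDiff ℝ 2 Q)
    (hsym : ∀ x, (Q x)ᵀ = Q x) (htr : ∀ x, Matrix.trace (Q x) = 0)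
    (hbd : ∀ x, frobNorm (Q x) ≤ r₂)
    (heq : ∀ x, -lapM Q x + tracelessPart (matGrad F (Q x)) = 0)
    (hint1 : Integrable (fun x => gradNormSq Q x))
    (hint2 : Integrable (fun x => F (Q x))) :
    ∀ x : E3, Q x = 0 := by
  have hdirichlet : Integrable (dirichletDensity (EuclideanSpace.basisFun (Fin 3) ℝ) frobForm Q) :=
    gradNormSq_eq_dirichletDensity (hQ.differentiable two_ne_zero) ▸ hint1
  exact stmt2_general _ (by simp) isPosSemidef_frobForm (hF.of_le one_le_two) hQ
    (fderiv_apply_fderiv_eq_frobForm_laplacian hQ htr heq) (fun x => hFpos _ (hbd x))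
    (fun x => hFzero _ (hbd x)) hdirichlet hint2
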